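/- Let N ≥ 3 be an integer, a ∈ ℝ, and let f : ℝ → ℝ be continuous with f(0) = 0. Let u : ℝ^N → ℝ be a C² function satisfying −Δu(x) + a·u(x) = f(u(x)) for every x ∈ ℝ^N, and assume there are constants C, c > 0 such that |u(x)| + ‖∇u(x)‖ ≤ C·exp(−c‖x‖) for all x ∈ ℝ^N. Then ∫_{ℝ^N} ‖∇u‖² dx + a·∫_{ℝ^N} u² dx = ∫_{ℝ^N} f(u(x))·u(x) dx. -/

import Mathlib

open MeasureTheory Real

/-- The Laplacian of `u` at `x`: the trace of the second derivative,
computed as the sum of pure second derivatives along the coordinate directions. -/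
noncomputable def lap {N : ℕ} (u : EuclideanSpace ℝ (Fin N) → ℝ)
    (x : EuclideanSpace ℝ (Fin N)) : ℝ :=
  ∑ i, iteratedFDeriv ℝ 2 u x ![EuclideanSpace.single i 1, EuclideanSpace.single i 1]

/-!
Testing the equation against `u` gives `div (u ∇u) = ‖∇u‖² + u Δu = ‖∇u‖² + a u² - f(u) u`, so the
identity says that the flux of `u ∇u` through infinity vanishes. The second derivatives of `u` are
not known to be separately integrable, only the divergence of the field `u ∇u` as a whole is, so one
cannot integrate by parts in each direction. Instead the field is cut off at scale `R`: the error is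
`∫ dχ_R(u ∇u) = O(1 / R)`, because `u ∇u` is integrable.
-/

open Filter Topology
open scoped ENNReal Laplacian RealInnerProductSpace

section NormedSpace

variable {E : Type*} [NormedAddCommGroup E] [NormedSpace ℝ E]

/-- The divergence of a vector field, in the basis-free form `tr (DF)`; it is `0` where `F` is not
differentiable. -/
noncomputable def divergence (F : E → E) (x : E) : ℝ :=
  LinearMap.trace ℝ E (fderiv ℝ F x)

variable [FiniteDimensional ℝ E]

lemma divergence_eq_sum_fderiv_repr {ι : Type*} [Fintype ι] (b : Module.Basis ι ℝ E) {F : E → E}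
    {x : E} (hF : DifferentiableAt ℝ F x) :
    divergence F x = ∑ i, fderiv ℝ (fun y ↦ b.repr (F y) i) x (b i) := by
  classical
  have hcoord (i : ι) (w : E) :
      fderiv ℝ (fun y ↦ b.repr (F y) i) x w = b.repr (fderiv ℝ F x w) i :=
    DFunLike.congr_fun
      ((b.coord i).toContinuousLinearMap.hasFDerivAt.comp x hF.hasFDerivAt).fderiv w
  simp [divergence, LinearMap.trace_eq_matrix_trace ℝ b, Matrix.trace, LinearMap.toMatrix_apply,
    hcoord]

lemma divergence_smul {v : E → ℝ} {F : E → E} {x : E} (hv : DifferentiableAt ℝ v x)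
    (hF : DifferentiableAt ℝ F x) :
    divergence (fun y ↦ v y • F y) x = fderiv ℝ v x (F x) + v x * divergence F x := by
  simp [divergence, fderiv_fun_smul hv hF, add_comm]

/-- A smooth cutoff at scale `R`: for `R ≠ 0` it equals `1` on the ball of radius `|R|` about the
origin and vanishes off the ball of radius `2 |R|`, while `cutoff 0` is constantly `1` because
`0⁻¹ = 0`. -/
noncomputable def cutoff (R : ℝ) (x : E) : ℝ :=
  (default : ContDiffBump (0 : E)) (R⁻¹ • x)

lemma contDiff_cutoff {n : ℕ∞} (R : ℝ) : ContDiff ℝ n (cutoff R : E → ℝ) :=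
  (default : ContDiffBump (0 : E)).contDiff.comp (contDiff_const_smul R⁻¹)

lemma hasCompactSupport_cutoff {R : ℝ} (hR : R ≠ 0) : HasCompactSupport (cutoff R : E → ℝ) :=
  (default : ContDiffBump (0 : E)).hasCompactSupport.comp_smul (inv_ne_zero hR)

lemma norm_cutoff_le_one (R : ℝ) (x : E) : ‖cutoff R x‖ ≤ 1 := by
  rw [cutoff, Real.norm_of_nonneg (default : ContDiffBump (0 : E)).nonneg]
  exact (default : ContDiffBump (0 : E)).le_one

lemma tendsto_cutoff_atTop (x : E) : Tendsto (fun R ↦ cutoff R x) atTop (𝓝 1) := by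
  let ψ : ContDiffBump (0 : E) := default
  have hψ : ψ 0 = 1 := ψ.one_of_mem_closedBall (Metric.mem_closedBall_self ψ.rIn_pos.le)
  have hscale : Tendsto (fun R : ℝ ↦ R⁻¹ • x) atTop (𝓝 0) := by
    simpa using (tendsto_inv_atTop_zero (𝕜 := ℝ)).smul_const x
  exact hψ ▸ (ψ.continuous.tendsto 0).comp hscale

lemma exists_norm_fderiv_cutoff_le :
    ∃ K : ℝ, ∀ (R : ℝ) (x : E), ‖fderiv ℝ (cutoff R) x‖ ≤ ‖R⁻¹‖ * K := by
  let ψ : ContDiffBump (0 : E) := default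
  obtain ⟨K, hK⟩ := (ψ.hasCompactSupport.fderiv ℝ).exists_bound_of_continuous
    (ψ.contDiff.continuous_fderiv one_ne_zero)
  refine ⟨K, fun R x ↦ ?_⟩
  have hscale : fderiv ℝ (cutoff R) x = R⁻¹ • fderiv ℝ ψ (R⁻¹ • x) := fderiv_comp_smul _
  rw [hscale, norm_smul]
  gcongr
  exact hK _

variable [MeasurableSpace E] {μ : Measure E}

lemma tendsto_integral_fderiv_cutoff {F : E → E} (hF : Integrable F μ) :
    Tendsto (fun R ↦ ∫ x, fderiv ℝ (cutoff R) x (F x) ∂μ) atTop (𝓝 0) := by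
  obtain ⟨K, hK⟩ := exists_norm_fderiv_cutoff_le (E := E)
  have hlim : Tendsto (fun R : ℝ ↦ ‖R⁻¹‖ * K * ∫ x, ‖F x‖ ∂μ) atTop (𝓝 0) := by
    simpa using ((tendsto_inv_atTop_zero (𝕜 := ℝ)).norm.mul_const K).mul_const (∫ x, ‖F x‖ ∂μ)
  refine squeeze_zero_norm (fun R ↦ ?_) hlim
  rw [← integral_const_mul]
  exact norm_integral_le_of_norm_le (hF.norm.const_mul _)
    (.of_forall fun x ↦ (fderiv ℝ (cutoff R) x).le_of_opNorm_le (hK R x) (F x))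

lemma tendsto_integral_cutoff_mul [OpensMeasurableSpace E] {g : E → ℝ} (hg : Integrable g μ) :
    Tendsto (fun R ↦ ∫ x, cutoff R x * g x ∂μ) atTop (𝓝 (∫ x, g x ∂μ)) := by
  refine tendsto_integral_filter_of_dominated_convergence (fun x ↦ ‖g x‖)
    (.of_forall fun R ↦ ?_) (.of_forall fun R ↦ .of_forall fun x ↦ ?_) hg.norm
    (.of_forall fun x ↦ ?_)
  · exact (contDiff_cutoff (n := 0) R).continuous.aestronglyMeasurable.mul hg.aestronglyMeasurable
  · rw [norm_mul]
    exact mul_le_of_le_one_left (norm_nonneg _) (norm_cutoff_le_one R x)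
  · simpa using (tendsto_cutoff_atTop x).mul_const (g x)

section AddHaar

variable [BorelSpace E] [μ.IsAddHaarMeasure]

lemma integral_smul_fderiv_eq_neg_fderiv_smul_of_hasCompactSupport {G : Type*}
    [NormedAddCommGroup G] [NormedSpace ℝ G] {φ : E → ℝ} {g : E → G} (hφ : ContDiff ℝ 1 φ)
    (hφc : HasCompactSupport φ) (hg : ContDiff ℝ 1 g) (v : E) :
    ∫ x, φ x • fderiv ℝ g x v ∂μ = -∫ x, fderiv ℝ φ x v • g x ∂μ := by
  have hφ' : Continuous fun x ↦ fderiv ℝ φ x v :=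
    (hφ.continuous_fderiv one_ne_zero).clm_apply continuous_const
  have hg' : Continuous fun x ↦ fderiv ℝ g x v :=
    (hg.continuous_fderiv one_ne_zero).clm_apply continuous_const
  exact integral_smul_fderiv_eq_neg_fderiv_smul_of_integrable
    ((hφ'.smul hg.continuous).integrable_of_hasCompactSupport (hφc.fderiv_apply ℝ v).smul_right)
    ((hφ.continuous.smul hg').integrable_of_hasCompactSupport hφc.smul_right)
    ((hφ.continuous.smul hg.continuous).integrable_of_hasCompactSupport hφc.smul_right)
    (fun x _ ↦ hφ.differentiable one_ne_zero x) (fun x _ ↦ hg.differentiable one_ne_zero x)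

lemma integral_mul_divergence_of_hasCompactSupport {φ : E → ℝ} {F : E → E} (hφ : ContDiff ℝ 1 φ)
    (hφc : HasCompactSupport φ) (hF : ContDiff ℝ 1 F) :
    ∫ x, φ x * divergence F x ∂μ = -∫ x, fderiv ℝ φ x (F x) ∂μ := by
  let b := Module.finBasis ℝ E
  have hcoord (i) : ContDiff ℝ 1 fun x ↦ b.repr (F x) i :=
    (b.coord i).toContinuousLinearMap.contDiff.comp hF
  have hdiv (x : E) : φ x * divergence F x =
      ∑ i, φ x • fderiv ℝ (fun y ↦ b.repr (F y) i) x (b i) := by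
    rw [divergence_eq_sum_fderiv_repr b (hF.differentiable one_ne_zero x), Finset.mul_sum]
    rfl
  have hfderiv (x : E) : fderiv ℝ φ x (F x) = ∑ i, fderiv ℝ φ x (b i) • b.repr (F x) i := by
    conv_lhs => rw [← b.sum_repr (F x), map_sum]
    simp [mul_comm]
  have hdiv_int (i) : Integrable (fun x ↦ φ x • fderiv ℝ (fun y ↦ b.repr (F y) i) x (b i)) μ :=
    (hφ.continuous.smul (((hcoord i).continuous_fderiv one_ne_zero).clm_apply
      continuous_const)).integrable_of_hasCompactSupport hφc.smul_right
  have hfderiv_int (i) : Integrable (fun x ↦ fderiv ℝ φ x (b i) • b.repr (F x) i) μ :=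
    (((hφ.continuous_fderiv one_ne_zero).clm_apply continuous_const).smul
      (hcoord i).continuous).integrable_of_hasCompactSupport (hφc.fderiv_apply ℝ _).smul_right
  simp only [hdiv, hfderiv]
  rw [integral_finsetSum _ fun i _ ↦ hdiv_int i, integral_finsetSum _ fun i _ ↦ hfderiv_int i,
    ← Finset.sum_neg_distrib]
  exact Finset.sum_congr rfl fun i _ ↦
    integral_smul_fderiv_eq_neg_fderiv_smul_of_hasCompactSupport hφ hφc (hcoord i) (b i)

theorem integral_divergence_eq_zero {F : E → E} (hF : ContDiff ℝ 1 F) (hF_int : Integrable F μ)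
    (hdiv_int : Integrable (divergence F) μ) : ∫ x, divergence F x ∂μ = 0 := by
  have hcut : ∀ᶠ R in atTop, ∫ x, cutoff R x * divergence F x ∂μ =
      -∫ x, fderiv ℝ (cutoff R) x (F x) ∂μ := by
    filter_upwards [eventually_ne_atTop 0] with R hR
    exact integral_mul_divergence_of_hasCompactSupport (contDiff_cutoff R)
      (hasCompactSupport_cutoff hR) hF
  refine tendsto_nhds_unique ((tendsto_integral_cutoff_mul hdiv_int).congr' hcut) ?_
  simpa using (tendsto_integral_fderiv_cutoff hF_int).neg

end AddHaar

end NormedSpace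

section InnerProductSpace

variable {E : Type*} [NormedAddCommGroup E] [InnerProductSpace ℝ E]

lemma contDiff_gradient [CompleteSpace E] {u : E → ℝ} {n : WithTop ℕ∞}
    (hu : ContDiff ℝ (n + 1) u) : ContDiff ℝ n (gradient u) :=
  (InnerProductSpace.toDual ℝ E).symm.contDiff.comp (hu.fderiv_right le_rfl)

variable [FiniteDimensional ℝ E]

lemma divergence_gradient (u : E → ℝ) (x : E) : divergence (gradient u) x = Δ u x := by
  let riesz : StrongDual ℝ E ≃ₗᵢ[ℝ] E := (InnerProductSpace.toDual ℝ E).symm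
  have hfderiv (w : E) : fderiv ℝ (gradient u) x w = riesz (fderiv ℝ (fderiv ℝ u) x w) :=
    DFunLike.congr_fun riesz.comp_fderiv w
  have hriesz (ℓ : StrongDual ℝ E) (w : E) : ⟪w, riesz ℓ⟫ = ℓ w :=
    (real_inner_comm _ _).trans InnerProductSpace.toDual_symm_apply
  rw [divergence, LinearMap.trace_eq_sum_inner _ (stdOrthonormalBasis ℝ E),
    InnerProductSpace.laplacian_eq_iteratedFDeriv_stdOrthonormalBasis]
  simp [hfderiv, hriesz, iteratedFDeriv_two_apply]

variable [MeasurableSpace E] [BorelSpace E] {μ : Measure E} [μ.IsAddHaarMeasure]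

theorem integral_mul_laplacian_eq_neg_integral_inner_gradient {u v : E → ℝ} (hu : ContDiff ℝ 2 u)
    (hv : ContDiff ℝ 1 v) (hfield : Integrable (fun x ↦ v x • gradient u x) μ)
    (hinner : Integrable (fun x ↦ ⟪gradient v x, gradient u x⟫) μ)
    (hlap : Integrable (fun x ↦ v x * Δ u x) μ) :
    ∫ x, v x * Δ u x ∂μ = -∫ x, ⟪gradient v x, gradient u x⟫ ∂μ := by
  have hgrad : ContDiff ℝ 1 (gradient u) := contDiff_gradient hu
  have hdiv : divergence (fun x ↦ v x • gradient u x) =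
      fun x ↦ ⟪gradient v x, gradient u x⟫ + v x * Δ u x := by
    ext x
    rw [divergence_smul (hv.differentiable one_ne_zero x) (hgrad.differentiable one_ne_zero x),
      divergence_gradient, inner_gradient_left]
  have hzero : ∫ x, divergence (fun y ↦ v y • gradient u y) x ∂μ = 0 :=
    integral_divergence_eq_zero (hv.smul hgrad) hfield (hdiv ▸ hinner.add hlap)
  rw [hdiv, integral_add hinner hlap] at hzero
  linarith

theorem nehari_identity_general (a : ℝ) (f : ℝ → ℝ) {u : E → ℝ} (hu : ContDiff ℝ 2 u)
    (heq : ∀ x, -Δ u x + a * u x = f (u x)) (hu_memLp : MemLp u 2 μ)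
    (hgrad_memLp : MemLp (gradient u) 2 μ) (hfu : Integrable (fun x ↦ f (u x) * u x) μ) :
    (∫ x, ‖gradient u x‖ ^ 2 ∂μ) + a * ∫ x, u x ^ 2 ∂μ = ∫ x, f (u x) * u x ∂μ := by
  have hpde : (fun x ↦ u x * Δ u x) = fun x ↦ a * u x ^ 2 - f (u x) * u x := by
    ext x
    rw [← heq x]
    ring
  have hu_sq : Integrable (fun x ↦ a * u x ^ 2) μ := hu_memLp.integrable_sq.const_mul a
  have hgreen := integral_mul_laplacian_eq_neg_integral_inner_gradient hu (hu.of_le one_le_two)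
    (memLp_one_iff_integrable.1 (hgrad_memLp.smul hu_memLp))
    (by simpa only [real_inner_self_eq_norm_sq] using hgrad_memLp.integrable_norm_pow two_ne_zero)
    (hpde ▸ hu_sq.sub hfu)
  simp only [hpde, real_inner_self_eq_norm_sq] at hgreen
  rw [integral_sub hu_sq hfu, integral_const_mul] at hgreen
  linarith

end InnerProductSpace

section ExpDecay

variable {E G : Type*} [NormedAddCommGroup E] [NormedAddCommGroup G]

/-- Exponential decay at infinity. The bound is required on the whole space, so that it also
controls the supremum. -/
def ExpDecay (g : E → G) : Prop :=
  ∃ C c : ℝ, 0 < c ∧ ∀ x, ‖g x‖ ≤ C * exp (-c * ‖x‖)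

lemma exp_neg_mul_norm_le_one {c : ℝ} (hc : 0 ≤ c) (x : E) : exp (-c * ‖x‖) ≤ 1 :=
  exp_le_one_iff.2 (mul_nonpos_of_nonpos_of_nonneg (neg_nonpos.2 hc) (norm_nonneg x))

lemma ExpDecay.exists_norm_le {g : E → G} (hg : ExpDecay g) : ∃ B, ∀ x, ‖g x‖ ≤ B := by
  obtain ⟨C, c, hc, hbound⟩ := hg
  have hC : 0 ≤ C := by simpa using (norm_nonneg _).trans (hbound 0)
  exact ⟨C, fun x ↦ (hbound x).trans (mul_le_of_le_one_right hC (exp_neg_mul_norm_le_one hc.le x))⟩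

variable [NormedSpace ℝ E] [FiniteDimensional ℝ E] [MeasurableSpace E] [BorelSpace E]
  {μ : Measure E} [μ.IsAddHaarMeasure]

lemma integrable_exp_neg_mul_norm {c : ℝ} (hc : 0 < c) :
    Integrable (fun x : E ↦ exp (-c * ‖x‖)) μ := by
  cases subsingleton_or_nontrivial E
  · exact .of_finite
  · rw [integrable_fun_norm_addHaar μ (f := fun r ↦ exp (-c * r))]
    have hradial := integrableOn_rpow_mul_exp_neg_mul_rpow (s := ↑(Module.finrank ℝ E - 1))
      (neg_one_lt_zero.trans_le (Nat.cast_nonneg _)) one_pos hc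
    simpa only [Real.rpow_natCast, Real.rpow_one, smul_eq_mul] using hradial

lemma memLp_exp_neg_mul_norm {c : ℝ} (hc : 0 < c) (p : ℝ≥0∞) :
    MemLp (fun x : E ↦ exp (-c * ‖x‖)) p μ := by
  have hmeas : AEStronglyMeasurable (fun x : E ↦ exp (-c * ‖x‖)) μ := by fun_prop
  rcases eq_or_ne p 0 with rfl | hp_zero
  · exact memLp_zero_iff_aestronglyMeasurable.2 hmeas
  rcases eq_or_ne p ∞ with rfl | hp_top
  · exact memLp_top_of_bound hmeas 1 (.of_forall fun x ↦ by
      simpa using exp_neg_mul_norm_le_one hc.le x)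
  refine (integrable_norm_rpow_iff hmeas hp_zero hp_top).1 ?_
  have hpow (x : E) : ‖exp (-c * ‖x‖)‖ ^ p.toReal = exp (-(c * p.toReal) * ‖x‖) := by
    rw [norm_of_nonneg (exp_pos _).le, ← exp_mul]
    ring_nf
  simpa only [hpow] using
    integrable_exp_neg_mul_norm (μ := μ) (mul_pos hc (ENNReal.toReal_pos hp_zero hp_top))

lemma ExpDecay.memLp {g : E → G} (hg : ExpDecay g) (hmeas : AEStronglyMeasurable g μ)
    (p : ℝ≥0∞) : MemLp g p μ := by
  obtain ⟨C, c, hc, hbound⟩ := hg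
  exact (memLp_exp_neg_mul_norm hc p).of_le_mul hmeas
    (.of_forall fun x ↦ by simpa only [norm_of_nonneg (exp_pos _).le] using hbound x)

lemma ExpDecay.integrable_comp_mul {u : E → ℝ} (hu : ExpDecay u) (hmeas : AEStronglyMeasurable u μ)
    {f : ℝ → ℝ} (hf : Continuous f) : Integrable (fun x ↦ f (u x) * u x) μ := by
  obtain ⟨B, hB⟩ := hu.exists_norm_le
  obtain ⟨M, hM⟩ := (isCompact_Icc (a := -B) (b := B)).exists_bound_of_continuousOn hf.continuousOn
  exact (memLp_one_iff_integrable.1 (hu.memLp hmeas 1)).bdd_mul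
    (hf.comp_aestronglyMeasurable hmeas) (.of_forall fun x ↦ hM _ (abs_le.1 (hB x)))

end ExpDecay

lemma lap_eq_laplacian {N : ℕ} (u : EuclideanSpace ℝ (Fin N) → ℝ) : lap u = Δ u := by
  ext x
  simp [lap, InnerProductSpace.laplacian_eq_iteratedFDeriv_orthonormalBasis u
    (EuclideanSpace.basisFun (Fin N) ℝ)]

theorem nehari_identity {N : ℕ} (hN : 3 ≤ N) (a : ℝ) (f : ℝ → ℝ)
    (hf : Continuous f) (hf0 : f 0 = 0)
    (u : EuclideanSpace ℝ (Fin N) → ℝ) (hu : ContDiff ℝ 2 u)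
    (heq : ∀ x, -lap u x + a * u x = f (u x))
    (C c : ℝ) (hC : 0 < C) (hc : 0 < c)
    (hdecay : ∀ x, |u x| + ‖gradient u x‖ ≤ C * Real.exp (-c * ‖x‖)) :
    (∫ x, ‖gradient u x‖ ^ 2) + a * ∫ x, u x ^ 2 = ∫ x, f (u x) * u x := by
  have hu_decay : ExpDecay u :=
    ⟨C, c, hc, fun x ↦ (le_add_of_nonneg_right (norm_nonneg _)).trans (hdecay x)⟩
  have hgrad_decay : ExpDecay (gradient u) :=
    ⟨C, c, hc, fun x ↦ (le_add_of_nonneg_left (abs_nonneg _)).trans (hdecay x)⟩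
  have hu_meas : AEStronglyMeasurable u := hu.continuous.aestronglyMeasurable
  have hgrad_meas : AEStronglyMeasurable (gradient u) :=
    (contDiff_gradient (n := 1) hu).continuous.aestronglyMeasurable
  exact nehari_identity_general a f hu (lap_eq_laplacian u ▸ heq) (hu_decay.memLp hu_meas 2)
    (hgrad_decay.memLp hgrad_meas 2) (hu_decay.integrable_comp_mul hu_meas hf)
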